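/- Fix an integer r ≥ 1. There exists a constant C > 0 such that for all real numbers x_1,…,x_r ≥ 1, the family of terms 1/(φ([n_1,…,n_r])·n_1·n_2⋯n_r), indexed by multi-indices N = (n_1,…,n_r) of positive integers with n_i > x_i for every i ∈ {1,…,r}, is summable and its sum is at most C/max(x_1,…,x_r). -/

import Mathlib

open scoped BigOperators

/-- The general term `1/(φ([n_1,…,n_r])·n_1⋯n_r)` associated to a multi-index
`N = (n_1,…,n_r)` of positive integers. -/
noncomputable def eulerTerm (r : ℕ) (N : Fin r → ℕ+) : ℝ :=
  1 / ((Nat.totient (Finset.univ.lcm fun i => (N i : ℕ)) : ℝ) * ∏ i, ((N i : ℕ) : ℝ))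



/-- `sg n = σ(n)/n`, as the sum of reciprocals of divisors. -/
noncomputable def sg (n : ℕ) : ℝ := ∑ d ∈ n.divisors, (1 : ℝ) / d

lemma sg_nonneg (n : ℕ) : 0 ≤ sg n := Finset.sum_nonneg fun _ _ => by positivity

lemma one_le_sg {n : ℕ} (hn : n ≠ 0) : 1 ≤ sg n := by
  have := Finset.single_le_sum (f := fun d : ℕ => (1 : ℝ) / d) (s := n.divisors)
    (fun _ _ => by positivity) (Nat.one_mem_divisors.2 hn)
  simpa [sg] using this

lemma sg_mul_le (a b : ℕ) : sg (a * b) ≤ sg a * sg b := by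
  classical
  unfold sg
  rw [Finset.sum_mul_sum, ← Finset.sum_product']
  have hm : ∀ p ∈ a.divisors ×ˢ b.divisors, p.1 * p.2 ∈ (a * b).divisors := by
    intro p hp
    rw [Finset.mem_product] at hp
    rw [Nat.divisors_mul]
    exact Finset.mul_mem_mul hp.1 hp.2
  rw [← Finset.sum_fiberwise_of_maps_to hm]
  apply Finset.sum_le_sum
  intro d hd
  rw [Nat.divisors_mul, Finset.mem_mul] at hd
  obtain ⟨y, hy, z, hz, rfl⟩ := hd
  have := Finset.single_le_sum (f := fun p : ℕ × ℕ => (1 : ℝ) / p.1 * (1 / p.2))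
    (s := {p ∈ a.divisors ×ˢ b.divisors | p.1 * p.2 = y * z})
    (fun _ _ => by positivity) (a := (y, z)) (by simp_all)
  refine le_trans (le_of_eq ?_) this
  push_cast
  rw [one_div_mul_one_div]

lemma sg_mul_coprime {a b : ℕ} (h : a.Coprime b) : sg (a * b) = sg a * sg b := by
  unfold sg
  rw [Finset.sum_mul_sum, ← Finset.sum_product', Nat.divisors_mul, ← Finset.image_mul_product,
    Finset.sum_image]
  · apply Finset.sum_congr rfl
    intro p _
    push_cast
    rw [one_div_mul_one_div]
  · have := h.mul_injOn_divisors
    exact_mod_cast this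

lemma le_totient_mul_sg (n : ℕ) : (n : ℝ) ≤ n.totient * sg n ^ 2 := by
  induction n using Nat.recOnPosPrimePosCoprime with
  | zero => simp
  | one => simp [sg]
  | prime_pow p k hp hk =>
    have h1 : 1 + 1 / (p : ℝ) ≤ sg (p ^ k) := by
      have hs : ({1, p} : Finset ℕ) ⊆ (p ^ k).divisors := by
        intro d hd
        have hp0 := hp.ne_zero
        simp only [Finset.mem_insert, Finset.mem_singleton] at hd
        rw [Nat.mem_divisors]
        refine ⟨?_, by positivity⟩
        rcases hd with rfl | rfl
        · simp
        · exact dvd_pow_self _ hk.ne'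
      have := Finset.sum_le_sum_of_subset_of_nonneg (f := fun d : ℕ => (1 : ℝ) / d) hs
        (fun _ _ _ => by positivity)
      rw [Finset.sum_pair hp.one_lt.ne] at this
      simpa [sg] using this
    rw [Nat.totient_prime_pow hp hk]
    obtain ⟨j, rfl⟩ : ∃ j, k = j + 1 := ⟨k - 1, by omega⟩
    have h2 : (2 : ℝ) ≤ p := by exact_mod_cast hp.two_le
    have h3 : (1 + 1 / (p : ℝ)) ^ 2 ≤ sg (p ^ (j + 1)) ^ 2 := by gcongr
    have h4 : (p : ℝ) ≤ (p - 1) * (1 + 1 / (p : ℝ)) ^ 2 := by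
      have : (p - 1) * (1 + 1 / (p : ℝ)) ^ 2 - p = (p ^ 2 - p - 1) / p ^ 2 := by
        field_simp; ring
      have : 0 ≤ ((p : ℝ) ^ 2 - p - 1) / p ^ 2 := by
        apply div_nonneg <;> nlinarith
      linarith
    push_cast [Nat.cast_sub hp.one_le]
    calc (p : ℝ) ^ (j + 1) = p ^ j * p := pow_succ _ _
      _ ≤ p ^ j * ((p - 1) * sg (p ^ (j + 1)) ^ 2) := by
        gcongr
        refine h4.trans ?_
        gcongr
        linarith
      _ = _ := by ring
  | coprime a b _ _ h iha ihb =>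
    rw [sg_mul_coprime h, Nat.totient_mul h]
    push_cast
    calc (a : ℝ) * b ≤ (a.totient * sg a ^ 2) * (b.totient * sg b ^ 2) := by gcongr
      _ = _ := by ring

lemma sg_pow_le (k : ℕ) : ∃ C : ℝ, 0 < C ∧ ∀ n : ℕ, n ≠ 0 →
    sg n ^ k ≤ C * ∑ d ∈ n.divisors, (d : ℝ) ^ (-(1 / 2) : ℝ) := by
  set ε : ℝ := 1 / (2 * (k + 1)) with hε
  have hε0 : 0 < ε := by positivity
  have hkε : k * ε ≤ 1 / 2 := by
    rw [hε, mul_one_div, div_le_div_iff₀ (by positivity) (by positivity)]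
    linarith
  have hsum : Summable fun d : ℕ => (d : ℝ) ^ (-(1 + ε)) :=
    Real.summable_nat_rpow.2 (by linarith)
  set Z := ∑' d : ℕ, (d : ℝ) ^ (-(1 + ε)) with hZ
  have hnn : ∀ d : ℕ, 0 ≤ (d : ℝ) ^ (-(1 + ε)) := fun d => by positivity
  have hZ1 : 1 ≤ Z := by
    have := hsum.le_tsum 1 (fun j _ => hnn j)
    rwa [Nat.cast_one, Real.one_rpow] at this
  refine ⟨Z ^ k, by positivity, fun n hn => ?_⟩
  set W := ∑ d ∈ n.divisors, (d : ℝ) ^ (-(1 + ε)) with hW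
  have hWZ : W ≤ Z := hsum.sum_le_tsum _ (fun j _ => hnn j)
  have hW1 : 1 ≤ W := by
    have := Finset.single_le_sum (f := fun d : ℕ => (d : ℝ) ^ (-(1 + ε))) (s := n.divisors)
      (fun _ _ => hnn _) (Nat.one_mem_divisors.2 hn)
    rwa [Nat.cast_one, Real.one_rpow] at this
  have hW0 : 0 < W := by linarith
  have key := Real.pow_arith_mean_le_arith_mean_pow n.divisors
    (fun d => (d : ℝ) ^ (-(1 + ε)) / W) (fun d => (d : ℝ) ^ ε)
    (fun d _ => by positivity) (by rw [← Finset.sum_div]; exact div_self hW0.ne')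
    (fun d _ => by positivity) k
  have e1 : ∑ d ∈ n.divisors, (d : ℝ) ^ (-(1 + ε)) / W * (d : ℝ) ^ ε = sg n / W := by
    unfold sg
    rw [Finset.sum_div]
    apply Finset.sum_congr rfl
    intro d hd
    have hd0 : (0 : ℝ) < d := by exact_mod_cast Nat.pos_of_mem_divisors hd
    rw [div_mul_eq_mul_div, ← Real.rpow_add hd0]
    congr 1
    rw [show -(1 + ε) + ε = -1 by ring, Real.rpow_neg_one, one_div]
  have e2 : ∑ d ∈ n.divisors, (d : ℝ) ^ (-(1 + ε)) / W * ((d : ℝ) ^ ε) ^ k ≤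
      ∑ d ∈ n.divisors, (d : ℝ) ^ (-(1 / 2) : ℝ) := by
    apply Finset.sum_le_sum
    intro d hd
    have hd1 : (1 : ℝ) ≤ d := by exact_mod_cast Nat.pos_of_mem_divisors hd
    have hd0 : (0 : ℝ) < d := by linarith
    calc (d : ℝ) ^ (-(1 + ε)) / W * ((d : ℝ) ^ ε) ^ k
        ≤ (d : ℝ) ^ (-(1 + ε)) * ((d : ℝ) ^ ε) ^ k := by
          gcongr
          exact div_le_self (hnn d) hW1
      _ = (d : ℝ) ^ (-(1 + ε) + ε * k) := by
          rw [Real.rpow_add hd0, Real.rpow_mul hd0.le, Real.rpow_natCast]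
      _ ≤ _ := Real.rpow_le_rpow_of_exponent_le hd1 (by linarith)
  rw [e1, div_pow, div_le_iff₀ (by positivity)] at key
  calc sg n ^ k ≤ _ := key
    _ ≤ (∑ d ∈ n.divisors, (d : ℝ) ^ (-(1 / 2) : ℝ)) * Z ^ k := by gcongr
    _ = _ := mul_comm _ _

open scoped ENNReal

lemma tail_sq (y : ℝ) (hy : 0 < y) :
    ∑' m : ℕ+, (if y < (m : ℕ) then ENNReal.ofReal (1 / ((m : ℕ) : ℝ) ^ 2) else 0) ≤
      ENNReal.ofReal (2 / y) := by
  have h1 := ENNReal.tsum_comp_le_tsum_of_injective PNat.coe_injective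
    (fun m : ℕ => if y < m then ENNReal.ofReal (1 / (m : ℝ) ^ 2) else 0)
  refine h1.trans ?_
  rw [ENNReal.tsum_eq_iSup_nat]
  refine iSup_le fun N => ?_
  have h2 : ∀ m : ℕ, (if y < m then ENNReal.ofReal (1 / (m : ℝ) ^ 2) else 0) =
      ENNReal.ofReal (if y < m then 1 / (m : ℝ) ^ 2 else 0) := by
    intro m; split_ifs <;> simp
  simp only [h2]
  rw [← ENNReal.ofReal_sum_of_nonneg (fun m _ => by split_ifs <;> positivity)]
  apply ENNReal.ofReal_le_ofReal
  have h3 : ∑ m ∈ Finset.range N, (if y < m then 1 / (m : ℝ) ^ 2 else 0) ≤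
      2 / y - 2 / max y N := by
    induction N with
    | zero => simp [hy.le]
    | succ N ih =>
      rw [Finset.sum_range_succ]
      by_cases h : y < N
      · rw [if_pos h]
        have hN : (0 : ℝ) < N := hy.trans h
        have hN1 : (1 : ℝ) ≤ N := by
          have : 0 < N := by exact_mod_cast hN
          exact_mod_cast this
        push_cast
        rw [max_eq_right h.le] at ih
        rw [max_eq_right (by linarith)]
        have : 2 / (N : ℝ) - 2 / (N + 1) - 1 / N ^ 2 = (N - 1) / (N ^ 2 * (N + 1)) := by
          field_simp; ring
        have : 0 ≤ ((N : ℝ) - 1) / (N ^ 2 * (N + 1)) := by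
          apply div_nonneg <;> [linarith; positivity]
        linarith
      · rw [if_neg h]
        rw [max_eq_left (not_lt.1 h)] at ih
        have : 2 / max y ((N + 1 : ℕ) : ℝ) ≤ 2 / y := by
          gcongr; exact le_max_left _ _
        linarith
  have : 0 ≤ 2 / max y N := by positivity
  linarith

lemma tail_sg (k : ℕ) : ∃ C : ℝ, 0 < C ∧ ∀ x : ℝ, 0 < x →
    ∑' n : ℕ+, (if x < (n : ℕ) then ENNReal.ofReal (sg n ^ k / ((n : ℕ) : ℝ) ^ 2) else 0) ≤
      ENNReal.ofReal (C / x) := by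
  obtain ⟨C, hC, hb⟩ := sg_pow_le k
  have hsum : Summable fun d : ℕ => (d : ℝ) ^ (-(3 / 2) : ℝ) :=
    Real.summable_nat_rpow.2 (by norm_num)
  set Z := ∑' d : ℕ, (d : ℝ) ^ (-(3 / 2) : ℝ) with hZ
  have hZ1 : 1 ≤ Z := by
    have := hsum.le_tsum 1 (fun j _ => by positivity)
    simpa using this
  refine ⟨2 * C * Z, by positivity, fun x hx => ?_⟩
  let F : ℕ → ℕ → ℝ≥0∞ := fun a b => if x < ((a * b : ℕ) : ℝ) then
    ENNReal.ofReal (C * (a : ℝ) ^ (-(1 / 2) : ℝ) / ((a * b : ℕ) : ℝ) ^ 2) else 0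
  calc _ ≤ ∑' n : ℕ+, ∑ p ∈ (n : ℕ).divisorsAntidiagonal, F p.1 p.2 := by
        refine ENNReal.tsum_le_tsum fun n => ?_
        have e : ∀ p ∈ (n : ℕ).divisorsAntidiagonal, F p.1 p.2 = if x < (n : ℕ) then
            ENNReal.ofReal (C * (p.1 : ℝ) ^ (-(1 / 2) : ℝ) / ((n : ℕ) : ℝ) ^ 2) else 0 := by
          intro p hp
          simp only [F, (Nat.mem_divisorsAntidiagonal.1 hp).1]
        rw [Finset.sum_congr rfl e]
        split_ifs
        · rw [← ENNReal.ofReal_sum_of_nonneg (fun m _ => by positivity)]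
          apply ENNReal.ofReal_le_ofReal
          rw [← Finset.sum_div, ← Finset.mul_sum,
            Nat.sum_divisorsAntidiagonal (fun d _ => (d : ℝ) ^ (-(1 / 2) : ℝ))]
          gcongr
          exact hb _ n.ne_zero
        · simp
    _ = ∑' q : (Σ n : ℕ+, (n : ℕ).divisorsAntidiagonal), F q.2.1.1 q.2.1.2 := by
        rw [ENNReal.tsum_sigma']
        refine tsum_congr fun n => ?_
        rw [tsum_fintype, Finset.sum_coe_sort (n : ℕ).divisorsAntidiagonal (fun p => F p.1 p.2)]
    _ = ∑' p : ℕ+ × ℕ+, F p.1 p.2 := by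
        rw [← sigmaAntidiagonalEquivProd.symm.tsum_eq]
        rfl
    _ = ∑' a : ℕ+, ∑' b : ℕ+, F a b := ENNReal.tsum_prod (f := fun a b : ℕ+ => F a b)
    _ ≤ ∑' a : ℕ+, ENNReal.ofReal (2 * C / x) * ENNReal.ofReal ((a : ℕ) ^ (-(3 / 2) : ℝ)) := by
        refine ENNReal.tsum_le_tsum fun a => ?_
        have ha : (0 : ℝ) < (a : ℕ) := by exact_mod_cast a.pos
        have e : ∀ b : ℕ+, F a b = ENNReal.ofReal (C * ((a : ℕ) : ℝ) ^ (-(5 / 2) : ℝ)) *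
            (if x / (a : ℕ) < (b : ℕ) then ENNReal.ofReal (1 / ((b : ℕ) : ℝ) ^ 2) else 0) := by
          intro b
          have hb : (0 : ℝ) < (b : ℕ) := by exact_mod_cast b.pos
          simp only [F]
          have : x < (((a : ℕ) * (b : ℕ) : ℕ) : ℝ) ↔ x / (a : ℕ) < (b : ℕ) := by
            rw [div_lt_iff₀ ha]; push_cast; rw [mul_comm]
          simp only [this]
          split_ifs
          · rw [← ENNReal.ofReal_mul (by positivity)]
            congr 1
            have : ((a : ℕ) : ℝ) ^ (-(1 / 2) : ℝ) = ((a : ℕ) : ℝ) ^ (-(5 / 2) : ℝ) * (a : ℕ) ^ 2 := by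
              rw [← Real.rpow_natCast, ← Real.rpow_add ha]; norm_num
            rw [this]; push_cast; field_simp
          · simp
        simp only [e]
        rw [ENNReal.tsum_mul_left]
        refine (mul_le_mul_right (tail_sq _ (by positivity)) _).trans ?_
        rw [← ENNReal.ofReal_mul (by positivity), ← ENNReal.ofReal_mul (by positivity)]
        apply le_of_eq
        congr 1
        have : ((a : ℕ) : ℝ) ^ (-(3 / 2) : ℝ) = ((a : ℕ) : ℝ) ^ (-(5 / 2) : ℝ) * (a : ℕ) := by
          nth_rewrite 3 [← Real.rpow_one (a : ℕ)]
          rw [← Real.rpow_add ha]; norm_num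
        rw [this]; field_simp
    _ ≤ _ := by
        rw [ENNReal.tsum_mul_left]
        have h1 := ENNReal.tsum_comp_le_tsum_of_injective PNat.coe_injective
          (fun m : ℕ => ENNReal.ofReal ((m : ℝ) ^ (-(3 / 2) : ℝ)))
        refine (mul_le_mul_right h1 _).trans ?_
        rw [← ENNReal.ofReal_tsum_of_nonneg (fun n => by positivity) hsum,
          ← ENNReal.ofReal_mul (by positivity)]
        apply le_of_eq
        congr 1
        ring

/-- The weight `sg(n)^k/φ(n)`. -/
noncomputable def wt (k n : ℕ) : ℝ≥0∞ := ENNReal.ofReal (sg n ^ k / n.totient)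

lemma tail_wt (k : ℕ) : ∃ C : ℝ, 0 < C ∧ ∀ x : ℝ, 0 < x →
    ∑' n : ℕ+, (if x < (n : ℕ) then ENNReal.ofReal (1 / (n : ℕ)) * wt k n else 0) ≤
      ENNReal.ofReal (C / x) := by
  obtain ⟨C, hC, h⟩ := tail_sg (k + 2)
  refine ⟨C, hC, fun x hx => le_trans (ENNReal.tsum_le_tsum fun n => ?_) (h x hx)⟩
  split_ifs
  · rw [wt, ← ENNReal.ofReal_mul (by positivity)]
    apply ENNReal.ofReal_le_ofReal
    have hn : (0 : ℝ) < (n : ℕ) := by exact_mod_cast n.pos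
    have ht : (0 : ℝ) < (n : ℕ).totient := by exact_mod_cast Nat.totient_pos.2 n.pos
    have h1 := le_totient_mul_sg n
    have h2 := pow_nonneg (sg_nonneg n) k
    rw [div_mul_div_comm, div_le_div_iff₀ (by positivity) (by positivity)]
    calc 1 * sg n ^ k * ((n : ℕ) : ℝ) ^ 2 = (sg n ^ k * (n : ℕ)) * (n : ℕ) := by ring
      _ ≤ (sg n ^ k * (n : ℕ)) * ((n : ℕ).totient * sg n ^ 2) := by gcongr
      _ = _ := by ring
  · exact le_rfl

lemma wt_mul_le (k a b : ℕ) (ha : 0 < a) (hb : 0 < b) : wt k (a * b) ≤ wt k a * wt k b := by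
  have h1 : 0 ≤ sg a ^ k / a.totient := div_nonneg (pow_nonneg (sg_nonneg _) _) (by positivity)
  rw [wt, wt, wt, ← ENNReal.ofReal_mul h1]
  apply ENNReal.ofReal_le_ofReal
  have ht : (0 : ℝ) < a.totient := by exact_mod_cast Nat.totient_pos.2 ha
  have ht' : (0 : ℝ) < b.totient := by exact_mod_cast Nat.totient_pos.2 hb
  have h2 : (a.totient : ℝ) * b.totient ≤ (a * b).totient := by
    exact_mod_cast Nat.totient_super_multiplicative a b
  have h0 := sg_nonneg a
  have h0' := sg_nonneg b
  have h0'' := sg_nonneg (a * b)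
  rw [div_mul_div_comm, ← mul_pow]
  gcongr
  exact sg_mul_le a b

lemma sum_wt_lcm (k : ℕ) : ∃ C : ℝ, 0 < C ∧ ∀ L : ℕ+,
    ∑' m : ℕ+, ENNReal.ofReal (1 / (m : ℕ)) * wt k (Nat.lcm L m) ≤
      ENNReal.ofReal C * wt (k + 1) L := by
  obtain ⟨C, hC, h⟩ := tail_wt k
  refine ⟨C / (1 / 2), by positivity, fun L => ?_⟩
  have h := h (1 / 2) (by norm_num)
  have hL := L.pos
  let F : ℕ → ℕ → ℝ≥0∞ := fun g j => (ENNReal.ofReal (1 / (g : ℝ)) * wt k L) *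
    (ENNReal.ofReal (1 / (j : ℝ)) * wt k j)
  let i : ℕ+ → (L : ℕ).divisors × ℕ+ := fun m =>
    (⟨Nat.gcd L m, Nat.mem_divisors.2 ⟨Nat.gcd_dvd_left _ _, hL.ne'⟩⟩,
      ⟨(m : ℕ) / Nat.gcd L m, Nat.div_pos (Nat.gcd_le_right _ m.pos) (Nat.gcd_pos_of_pos_left _ hL)⟩)
  have hi : Function.Injective i := by
    intro m m' hmm
    have h1 : Nat.gcd L m = Nat.gcd L m' := congrArg (fun p => (p.1 : ℕ)) hmm
    have h2 : (m : ℕ) / Nat.gcd L m = (m' : ℕ) / Nat.gcd L m' :=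
      congrArg (fun p => (p.2 : ℕ)) hmm
    apply PNat.eq
    rw [← Nat.div_mul_cancel (Nat.gcd_dvd_right L m), ← Nat.div_mul_cancel (Nat.gcd_dvd_right L m'),
      h2, h1]
  calc _ ≤ ∑' m : ℕ+, (fun p : (L : ℕ).divisors × ℕ+ => F p.1 p.2) (i m) := by
        refine ENNReal.tsum_le_tsum fun m => ?_
        simp only [i, F, PNat.mk_coe]
        have hg := Nat.gcd_pos_of_pos_left (m : ℕ) hL
        have hj := Nat.div_pos (Nat.gcd_le_right (L : ℕ) m.pos) hg
        have e1 : Nat.lcm L m = L * (m / Nat.gcd L m) := by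
          rw [Nat.lcm, Nat.mul_div_assoc _ (Nat.gcd_dvd_right _ _)]
        have e2 : (1 : ℝ) / (m : ℕ) = 1 / (Nat.gcd L m : ℕ) * (1 / ((m / Nat.gcd L m : ℕ) : ℝ)) := by
          rw [one_div_mul_one_div, ← Nat.cast_mul, Nat.mul_div_cancel' (Nat.gcd_dvd_right _ _)]
        rw [e1, e2, ENNReal.ofReal_mul (by positivity), mul_mul_mul_comm]
        gcongr
        exact wt_mul_le _ _ _ hL hj
    _ ≤ ∑' p : (L : ℕ).divisors × ℕ+, F p.1 p.2 :=
        ENNReal.tsum_comp_le_tsum_of_injective hi _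
    _ = ∑' (g : (L : ℕ).divisors) (j : ℕ+), F g j :=
        ENNReal.tsum_prod (f := fun (g : (L : ℕ).divisors) (j : ℕ+) => F g j)
    _ ≤ ∑' (g : (L : ℕ).divisors), ENNReal.ofReal (1 / ((g : ℕ) : ℝ)) * wt k L *
          ENNReal.ofReal (C / (1 / 2)) := by
        refine ENNReal.tsum_le_tsum fun g => ?_
        simp only [F]
        rw [ENNReal.tsum_mul_left]
        gcongr
        refine le_trans (le_of_eq (tsum_congr fun n => ?_)) h
        have : (1 : ℝ) ≤ (n : ℕ) := by exact_mod_cast n.pos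
        rw [if_pos (by linarith)]
    _ = _ := by
        rw [ENNReal.tsum_mul_right, ENNReal.tsum_mul_right, tsum_fintype,
          Finset.sum_coe_sort (L : ℕ).divisors (fun g => ENNReal.ofReal (1 / (g : ℝ))),
          ← ENNReal.ofReal_sum_of_nonneg (fun m _ => by positivity), mul_comm]
        congr 1
        have := sg_nonneg L
        change ENNReal.ofReal (sg L) * _ = _
        rw [wt, wt, ← ENNReal.ofReal_mul (sg_nonneg L)]
        congr 1
        ring

lemma lcm_succAbove {r : ℕ} (j : Fin (r + 1)) (N : Fin (r + 1) → ℕ+) :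
    (Finset.univ.lcm fun i => (N i : ℕ)) =
      Nat.lcm (N j) (Finset.univ.lcm fun i => (N (j.succAbove i) : ℕ)) := by
  apply Nat.dvd_antisymm
  · rw [Finset.lcm_dvd_iff]
    rw [Fin.forall_iff_succAbove j]
    refine ⟨fun _ => Nat.dvd_lcm_left _ _, fun i _ => dvd_trans ?_ (Nat.dvd_lcm_right _ _)⟩
    exact Finset.dvd_lcm (f := fun i => (N (j.succAbove i) : ℕ)) (Finset.mem_univ i)
  · apply Nat.lcm_dvd
    · exact Finset.dvd_lcm (f := fun i => (N i : ℕ)) (Finset.mem_univ j)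
    · rw [Finset.lcm_dvd_iff]
      intro i _
      exact Finset.dvd_lcm (f := fun i => (N i : ℕ)) (Finset.mem_univ (j.succAbove i))

lemma tsum_insertNth {r : ℕ} (j : Fin (r + 1)) (f : (Fin (r + 1) → ℕ+) → ℝ≥0∞) :
    ∑' N, f N = ∑' (m : ℕ+) (N : Fin r → ℕ+), f (j.insertNth m N) := by
  rw [← (Fin.insertNthEquiv (fun _ => ℕ+) j).tsum_eq]
  exact ENNReal.tsum_prod (f := fun (m : ℕ+) (N : Fin r → ℕ+) => f (j.insertNth m N))

lemma sum_multi (r : ℕ) : ∀ k : ℕ, ∃ C : ℝ, 0 < C ∧ ∀ L : ℕ+,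
    ∑' N : Fin r → ℕ+, (∏ i, ENNReal.ofReal (1 / (N i : ℕ))) *
      wt k (Nat.lcm L (Finset.univ.lcm fun i => (N i : ℕ))) ≤
      ENNReal.ofReal C * wt (k + r) L := by
  induction r with
  | zero =>
    intro k
    refine ⟨1, one_pos, fun L => ?_⟩
    rw [tsum_fintype]
    simp
  | succ r ih =>
    intro k
    obtain ⟨C, hC, h⟩ := ih k
    obtain ⟨C', hC', h'⟩ := sum_wt_lcm (k + r)
    refine ⟨C * C', by positivity, fun L => ?_⟩
    rw [tsum_insertNth 0]
    calc _ ≤ ∑' m : ℕ+, ENNReal.ofReal C *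
          (ENNReal.ofReal (1 / (m : ℕ)) * wt (k + r) (Nat.lcm L m)) := by
          refine ENNReal.tsum_le_tsum fun m => ?_
          simp only [Fin.prod_univ_succAbove _ 0, lcm_succAbove 0, Fin.insertNth_apply_same,
            Fin.insertNth_apply_succAbove, ← Nat.lcm_assoc, mul_assoc]
          rw [ENNReal.tsum_mul_left, mul_left_comm]
          have := h (PNat.lcm L m)
          rw [PNat.lcm_coe] at this
          gcongr
      _ ≤ _ := by
          rw [ENNReal.tsum_mul_left, ENNReal.ofReal_mul hC.le, mul_assoc]
          gcongr
          exact h' L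

lemma ofReal_eulerTerm (r : ℕ) (N : Fin r → ℕ+) : ENNReal.ofReal (eulerTerm r N) =
    (∏ i, ENNReal.ofReal (1 / (N i : ℕ))) * wt 0 (Finset.univ.lcm fun i => (N i : ℕ)) := by
  rw [wt, ← ENNReal.ofReal_prod_of_nonneg (fun i _ => by positivity),
    ← ENNReal.ofReal_mul (Finset.prod_nonneg fun i _ => by positivity), eulerTerm]
  congr 1
  rw [Finset.prod_div_distrib, Finset.prod_const_one, pow_zero, one_div_mul_one_div, mul_comm]

/-- Fix `r ≥ 1`. There is a constant `C > 0` such that for all reals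
`x_1,…,x_r ≥ 1`, the family `1/(φ([n_1,…,n_r])·n_1⋯n_r)` over multi-indices with
`n_i > x_i` for every `i` is summable with sum at most `C/max(x_1,…,x_r)`. -/
theorem tail_sum_totient_lcm_max_bigO (r : ℕ) (hr : 1 ≤ r) :
    ∃ C : ℝ, 0 < C ∧ ∀ x : Fin r → ℝ, (∀ i, 1 ≤ x i) →
      Summable (fun N : {N : Fin r → ℕ+ // ∀ i, x i < ((N i : ℕ) : ℝ)} => eulerTerm r N.1) ∧
      ∑' N : {N : Fin r → ℕ+ // ∀ i, x i < ((N i : ℕ) : ℝ)}, eulerTerm r N.1 ≤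
        C / Finset.univ.sup' ⟨⟨0, hr⟩, Finset.mem_univ _⟩ x := by
  obtain ⟨r, rfl⟩ : ∃ s, r = s + 1 := ⟨r - 1, by omega⟩
  obtain ⟨C, hC, h⟩ := sum_multi r 0
  obtain ⟨C', hC', h'⟩ := tail_wt (0 + r)
  refine ⟨C * C', by positivity, fun x hx => ?_⟩
  obtain ⟨j, -, hj⟩ := Finset.exists_mem_eq_sup' ⟨⟨0, hr⟩, Finset.mem_univ _⟩ x
  rw [hj]
  have hxj : 0 < x j := by linarith [hx j]
  have hnn : ∀ N : Fin (r + 1) → ℕ+, 0 ≤ eulerTerm (r + 1) N := fun N => by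
    unfold eulerTerm; positivity
  have key : ∑' N : {N : Fin (r + 1) → ℕ+ // ∀ i, x i < ((N i : ℕ) : ℝ)},
      ENNReal.ofReal (eulerTerm (r + 1) N.1) ≤ ENNReal.ofReal (C * C' / x j) := by
    let f : (Fin (r + 1) → ℕ+) → ℝ≥0∞ := fun N =>
      if x j < (N j : ℕ) then ENNReal.ofReal (eulerTerm (r + 1) N) else 0
    calc _ = ∑' N : {N : Fin (r + 1) → ℕ+ // ∀ i, x i < ((N i : ℕ) : ℝ)}, f N.1 := by
          refine tsum_congr fun N => ?_
          simp only [f]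
          rw [if_pos (N.2 j)]
      _ ≤ ∑' N, f N := ENNReal.tsum_comp_le_tsum_of_injective Subtype.val_injective f
      _ ≤ ∑' m : ℕ+, ENNReal.ofReal C * (if x j < (m : ℕ) then
            ENNReal.ofReal (1 / (m : ℕ)) * wt (0 + r) m else 0) := by
          rw [tsum_insertNth j]
          refine ENNReal.tsum_le_tsum fun m => ?_
          simp only [f, ofReal_eulerTerm, Fin.prod_univ_succAbove _ j, lcm_succAbove j,
            Fin.insertNth_apply_same, Fin.insertNth_apply_succAbove, mul_assoc]
          split_ifs
          · rw [ENNReal.tsum_mul_left, mul_left_comm]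
            have := h m
            gcongr
          · simp
      _ ≤ _ := by
          rw [ENNReal.tsum_mul_left, mul_div_assoc, ENNReal.ofReal_mul hC.le]
          gcongr
          exact h' _ hxj
  have hfin := ne_top_of_le_ne_top ENNReal.ofReal_ne_top key
  have hs := ENNReal.summable_toReal hfin
  have ht := ENNReal.tsum_toReal_eq
    (f := fun N : {N : Fin (r + 1) → ℕ+ // ∀ i, x i < ((N i : ℕ) : ℝ)} =>
      ENNReal.ofReal (eulerTerm (r + 1) N.1)) (fun _ => ENNReal.ofReal_ne_top)
  simp only [ENNReal.toReal_ofReal (hnn _)] at hs ht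
  refine ⟨hs, ?_⟩
  rw [← ht]
  exact ENNReal.toReal_le_of_le_ofReal (by positivity) key
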